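/- arXiv:2502.17292 — 9 statements merged into one kernel-verified Lean document; each statement's English description precedes it below -/
import Mathlib

section
/- Let d ≥ 1, let c ≥ 1, and let z_1, …, z_n ∈ ℝ^d satisfy ‖z_i‖₂ ≤ 1 for all i. For k = 1, …, n define the Gram matrix A_k = c·I_d + Σ_{i<k} z_i z_iᵀ (so A_1 = c·I_d). Then Σ_{i=1}^n z_iᵀ A_i⁻¹ z_i ≤ 2d·log(c + n/d) + 2·log(c). -/
open Matrix in
lemma ep_det {d : ℕ} (A : Matrix (Fin d) (Fin d) ℝ) (hA : A.PosDef) (z : Fin d → ℝ) :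
    (A + vecMulVec z z).det = A.det * (1 + z ⬝ᵥ (A⁻¹ *ᵥ z)) := by
  have hu : IsUnit A.det := hA.det_pos.ne'.isUnit
  have h : A + vecMulVec z z = A * (1 + vecMulVec (A⁻¹ *ᵥ z) z) := by
    rw [mul_add, mul_one, mul_vecMulVec, mulVec_mulVec, mul_nonsing_inv _ hu, one_mulVec]
  rw [h, det_mul, vecMulVec_eq Unit, det_one_add_replicateCol_mul_replicateRow]

open Matrix in
lemma ep_le_one {d : ℕ} (c : ℝ) (hc : 1 ≤ c) (B : Matrix (Fin d) (Fin d) ℝ) (hB : B.PosSemidef)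
    (hA : (c • (1 : Matrix (Fin d) (Fin d) ℝ) + B).PosDef) (z : Fin d → ℝ) (hz : z ⬝ᵥ z ≤ 1) :
    z ⬝ᵥ ((c • (1 : Matrix (Fin d) (Fin d) ℝ) + B)⁻¹ *ᵥ z) ≤ 1 := by
  set A := c • (1 : Matrix (Fin d) (Fin d) ℝ) + B with hAdef
  have hu : IsUnit A.det := hA.det_pos.ne'.isUnit
  set w := A⁻¹ *ᵥ z with hw
  have h1 : A *ᵥ w = z := by
    rw [hw, mulVec_mulVec, mul_nonsing_inv _ hu, one_mulVec]
  have h2 : z ⬝ᵥ w = c * (w ⬝ᵥ w) + w ⬝ᵥ (B *ᵥ w) := by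
    rw [dotProduct_comm]
    conv_lhs => rw [← h1]
    rw [hAdef, add_mulVec, smul_mulVec, one_mulVec, dotProduct_add, dotProduct_smul, smul_eq_mul]
  have h3 : 0 ≤ w ⬝ᵥ (B *ᵥ w) := by simpa using hB.dotProduct_mulVec_nonneg w
  have h4 : 0 ≤ w ⬝ᵥ w := by simpa using dotProduct_star_self_nonneg w
  have h5 : (z ⬝ᵥ w) ^ 2 ≤ (z ⬝ᵥ z) * (w ⬝ᵥ w) := by
    have := Finset.sum_mul_sq_le_sq_mul_sq Finset.univ z w
    simpa [dotProduct, pow_two] using this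
  have h6 : w ⬝ᵥ w ≤ z ⬝ᵥ w := by nlinarith
  by_contra! h
  nlinarith

lemma ep_log (x : ℝ) (h0 : 0 ≤ x) (h1 : x ≤ 1) : x ≤ 2 * Real.log (1 + x) := by
  have h := Real.le_log_one_add_of_nonneg h0
  have : x / 2 ≤ 2 * x / (x + 2) := by
    rw [div_le_div_iff₀ (by norm_num) (by linarith)]
    nlinarith
  linarith

open Matrix in
lemma ep_logdet {d : ℕ} (A : Matrix (Fin d) (Fin d) ℝ) (hA : A.PosDef) (m : ℝ) (hm : 0 < m)
    (ht : A.trace ≤ d * m) : Real.log A.det ≤ d * Real.log m := by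
  have hdet := hA.1.det_eq_prod_eigenvalues
  have htr := hA.1.trace_eq_sum_eigenvalues
  simp only [RCLike.ofReal_real_eq_id, id] at hdet htr
  rw [hdet, Real.log_prod (fun i _ => (hA.eigenvalues_pos i).ne')]
  have key : ∀ i, Real.log (hA.1.eigenvalues i) ≤ Real.log m + (hA.1.eigenvalues i / m - 1) := by
    intro i
    have h := Real.log_le_sub_one_of_pos (div_pos (hA.eigenvalues_pos i) hm)
    rw [Real.log_div (hA.eigenvalues_pos i).ne' hm.ne'] at h
    linarith
  refine (Finset.sum_le_sum fun i _ => key i).trans ?_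
  rw [Finset.sum_add_distrib, Finset.sum_sub_distrib, ← Finset.sum_div, ← htr]
  simp only [Finset.sum_const, Finset.card_univ, Fintype.card_fin, nsmul_eq_mul, mul_one]
  have : A.trace / m ≤ d := by rwa [div_le_iff₀ hm]
  linarith

open Matrix in
/-- **Elliptical potential lemma (squared version).** For vectors `z₁,…,zₙ ∈ ℝ^d` with
`‖zᵢ‖₂ ≤ 1` and Gram matrices `Aₖ = c·I + ∑_{i<k} zᵢzᵢᵀ` (with `c ≥ 1`, `d ≥ 1`),
`∑_{i=1}^n zᵢᵀ Aᵢ⁻¹ zᵢ ≤ 2d·log(c + n/d) + 2·log c`. -/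
theorem elliptical_potential_squared
    (d : ℕ) (hd : 1 ≤ d) (c : ℝ) (hc : 1 ≤ c) (n : ℕ)
    (z : ℕ → Fin d → ℝ)
    (hz : ∀ i < n, Real.sqrt (∑ j, z i j ^ 2) ≤ 1)
    (A : ℕ → Matrix (Fin d) (Fin d) ℝ)
    (hA : ∀ k, A k = c • (1 : Matrix (Fin d) (Fin d) ℝ) +
      ∑ i ∈ Finset.range k, vecMulVec (z i) (z i)) :
    ∑ i ∈ Finset.range n, z i ⬝ᵥ ((A i)⁻¹ *ᵥ z i)
      ≤ 2 * d * Real.log (c + n / d) + 2 * Real.log c := by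
  have hB : ∀ k, (∑ i ∈ Finset.range k, vecMulVec (z i) (z i)).PosSemidef := fun k =>
    posSemidef_sum _ fun i _ => by simpa using posSemidef_vecMulVec_self_star (z i)
  have hc0 : 0 < c := by linarith
  have hP : ∀ k, (A k).PosDef := fun k => by
    rw [hA]
    exact (PosDef.one.smul hc0).add_posSemidef (hB k)
  have hzz : ∀ i < n, z i ⬝ᵥ z i ≤ 1 := fun i hi => by
    have h := hz i hi
    rw [Real.sqrt_le_one] at h
    simpa [dotProduct, pow_two] using h
  have hdet : ∀ k ≤ n, ∑ i ∈ Finset.range k, z i ⬝ᵥ ((A i)⁻¹ *ᵥ z i)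
      ≤ 2 * Real.log (A k).det - 2 * (d * Real.log c) := by
    intro k
    induction k with
    | zero => intro _; simp [hA, Real.log_pow]
    | succ k ih =>
      intro hk
      have hq0 : 0 ≤ z k ⬝ᵥ ((A k)⁻¹ *ᵥ z k) := by
        simpa using (hP k).inv.posSemidef.dotProduct_mulVec_nonneg (z k)
      have hq1 : z k ⬝ᵥ ((A k)⁻¹ *ᵥ z k) ≤ 1 := by
        have := hP k
        rw [hA] at this ⊢
        exact ep_le_one c hc _ (hB k) this _ (hzz k hk)
      have hs : A (k+1) = A k + vecMulVec (z k) (z k) := by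
        rw [hA, hA, Finset.sum_range_succ, add_assoc]
      rw [Finset.sum_range_succ, hs, ep_det _ (hP k),
        Real.log_mul (hP k).det_pos.ne' (by linarith)]
      have := ep_log _ hq0 hq1
      have := ih (by omega)
      linarith
  have hd0 : (0 : ℝ) < d := by exact_mod_cast hd
  have htr : (A n).trace ≤ d * (c + n / d) := by
    rw [hA, trace_add, trace_smul, trace_one, trace_sum, mul_add, mul_div_cancel₀ _ hd0.ne']
    have : ∑ i ∈ Finset.range n, (vecMulVec (z i) (z i)).trace ≤ ∑ i ∈ Finset.range n, (1:ℝ) :=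
      Finset.sum_le_sum fun i hi => by
        rw [trace_vecMulVec]; exact hzz i (Finset.mem_range.1 hi)
    simp at this ⊢
    linarith
  have h1 := ep_logdet _ (hP n) (c + n / d) (by positivity) htr
  have h2 := hdet n le_rfl
  have h3 : 0 ≤ Real.log c := Real.log_nonneg hc
  have h4 : 0 ≤ d * Real.log c := by positivity
  linarith
end

section
/- Let x_1, …, x_n ∈ ℝ^d be vectors with ‖x_i‖₂ ≤ 1 for all i ∈ [n], and set Σ = 18·I_d + Σ_{i=1}^n x_i x_iᵀ. Then there exists a subset S ⊆ [n] with |S| ≤ n/2 such that 18·I_d + Σ_{i∈S} x_i x_iᵀ ⪰ (1/9)·Σ, where ⪰ denotes the Loewner (positive-semidefinite) order. -/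
open Matrix in
lemma ks_sherman {d : ℕ} (M G : Matrix (Fin d) (Fin d) ℝ) (hG : G.PosDef) (hMG : M * G = 1)
    (x : Fin d → ℝ) (hp : x ⬝ᵥ G *ᵥ x < 1) :
    (G + (1 - x ⬝ᵥ G *ᵥ x)⁻¹ • vecMulVec (G *ᵥ x) (G *ᵥ x)).PosDef ∧
    (M - vecMulVec x x) * (G + (1 - x ⬝ᵥ G *ᵥ x)⁻¹ • vecMulVec (G *ᵥ x) (G *ᵥ x)) = 1 := by
  have hGT : x ᵥ* G = G *ᵥ x := by
    have h := hG.isHermitian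
    rw [← mulVec_transpose]
    congr 1
  have h1 : (0:ℝ) < 1 - x ⬝ᵥ G *ᵥ x := by linarith
  constructor
  · apply hG.add_posSemidef
    have := (posSemidef_vecMulVec_self_star (G *ᵥ x)).smul (inv_nonneg.2 h1.le)
    simpa using this
  · have e1 : M * vecMulVec (G *ᵥ x) (G *ᵥ x) = vecMulVec x (G *ᵥ x) := by
      rw [mul_vecMulVec, mulVec_mulVec, hMG, one_mulVec]
    have e2 : vecMulVec x x * G = vecMulVec x (G *ᵥ x) := by
      rw [vecMulVec_mul, hGT]
    have e3 : vecMulVec x x * vecMulVec (G *ᵥ x) (G *ᵥ x)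
        = (x ⬝ᵥ G *ᵥ x) • vecMulVec x (G *ᵥ x) := by
      rw [vecMulVec_mul_vecMulVec]
      ext i j
      simp [vecMulVec_apply]
      ring
    rw [sub_mul, mul_add, mul_add, mul_smul_comm, mul_smul_comm, hMG, e1, e2, e3, smul_smul]
    generalize vecMulVec x (G *ᵥ x) = V
    generalize x ⬝ᵥ G *ᵥ x = p at *
    have : (1 - p)⁻¹ • V = V + ((1 - p)⁻¹ * p) • V := by
      have : (1 - p)⁻¹ = 1 + (1 - p)⁻¹ * p := by field_simp; ring
      conv_lhs => rw [this]
      rw [add_smul, one_smul]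
    rw [this]; abel

open Matrix in
lemma ks_shift {d : ℕ} (M X : Matrix (Fin d) (Fin d) ℝ) (δ : ℝ)
    (hM : M.PosDef) (hM' : (M + δ • X).PosDef) (y : Fin d → ℝ) :
    y ⬝ᵥ (M + δ • X)⁻¹ *ᵥ y + δ * (((M + δ • X)⁻¹ *ᵥ y) ⬝ᵥ X *ᵥ ((M + δ • X)⁻¹ *ᵥ y))
      ≤ y ⬝ᵥ M⁻¹ *ᵥ y := by
  set z := (M + δ • X)⁻¹ *ᵥ y with hz
  set w := M⁻¹ *ᵥ y with hw
  have d1 : IsUnit M.det := (isUnit_iff_isUnit_det _).1 hM.isUnit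
  have d2 : IsUnit (M + δ • X).det := (isUnit_iff_isUnit_det _).1 hM'.isUnit
  have e1 : M *ᵥ w = y := by rw [hw, mulVec_mulVec, mul_nonsing_inv _ d1, one_mulVec]
  have e2 : M *ᵥ z + δ • (X *ᵥ z) = y := by
    rw [← smul_mulVec, ← add_mulVec, hz, mulVec_mulVec, mul_nonsing_inv _ d2, one_mulVec]
  have h := hM.posSemidef.dotProduct_mulVec_nonneg (w - z)
  have e3 : M *ᵥ z = y - δ • (X *ᵥ z) := by rw [← e2]; simp
  have hsym : w ⬝ᵥ M *ᵥ z = y ⬝ᵥ z := by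
    rw [dotProduct_mulVec, ← mulVec_transpose, show Mᵀ = M from hM.isHermitian, e1]
  simp only [star_trivial, mulVec_sub, e1, dotProduct_sub, sub_dotProduct, hsym] at h
  rw [e3, dotProduct_sub, dotProduct_smul, smul_eq_mul, dotProduct_comm w y,
    dotProduct_comm z y] at h
  linarith

open Matrix in
lemma ks_quad {d n : ℕ} (x : Fin n → Fin d → ℝ) (T : Finset (Fin n)) (z : Fin d → ℝ) :
    z ⬝ᵥ (∑ i ∈ T, vecMulVec (x i) (x i)) *ᵥ z = ∑ i ∈ T, (x i ⬝ᵥ z) ^ 2 := by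
  rw [sum_mulVec, dotProduct_sum]
  refine Finset.sum_congr rfl fun i _ => ?_
  rw [vecMulVec_mulVec]
  simp [dotProduct_comm z (x i), sq]

open Matrix in
lemma ks_psd {d n : ℕ} (x : Fin n → Fin d → ℝ) (T : Finset (Fin n)) :
    (∑ i ∈ T, vecMulVec (x i) (x i)).PosSemidef := by
  apply posSemidef_sum
  intro i _
  simpa using posSemidef_vecMulVec_self_star (x i)

open Matrix in
lemma ks_step {d n : ℕ} (x : Fin n → Fin d → ℝ) (M : Matrix (Fin d) (Fin d) ℝ) (hM : M.PosDef)
    (hne : ∃ i, x i ≠ 0) (δ : ℝ) (hδ : 0 < δ) (R : Finset (Fin n))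
    (hR : 1 / δ + ∑ i, x i ⬝ᵥ M⁻¹ *ᵥ x i < R.card) :
    ∃ i ∈ R, (M + δ • (∑ i, vecMulVec (x i) (x i)) - vecMulVec (x i) (x i)).PosDef ∧
      ∑ j, x j ⬝ᵥ (M + δ • (∑ i, vecMulVec (x i) (x i)) - vecMulVec (x i) (x i))⁻¹ *ᵥ x j
        ≤ ∑ i, x i ⬝ᵥ M⁻¹ *ᵥ x i := by
  set X := ∑ i, vecMulVec (x i) (x i) with hX
  have hM' : (M + δ • X).PosDef := hM.add_posSemidef ((ks_psd x Finset.univ).smul hδ.le)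
  set G := (M + δ • X)⁻¹ with hGdef
  have hG : G.PosDef := hM'.inv
  have hMG : (M + δ • X) * G = 1 :=
    mul_nonsing_inv _ ((isUnit_iff_isUnit_det _).1 hM'.isUnit)
  set Φ := ∑ i, x i ⬝ᵥ M⁻¹ *ᵥ x i with hΦ
  let q : Fin n → ℝ := fun i => ∑ j, (x j ⬝ᵥ G *ᵥ x i) ^ 2
  let p : Fin n → ℝ := fun i => x i ⬝ᵥ G *ᵥ x i
  have hq0 : ∀ i, 0 ≤ q i := fun i => Finset.sum_nonneg fun j _ => sq_nonneg _
  have hp0 : ∀ i, 0 ≤ p i := fun i => by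
    simpa using hG.posSemidef.dotProduct_mulVec_nonneg (x i)
  have hshift : ∑ i, p i + δ * ∑ i, q i ≤ Φ := by
    rw [Finset.mul_sum, ← Finset.sum_add_distrib]
    refine Finset.sum_le_sum fun i _ => ?_
    have := ks_shift M X δ hM hM' (x i)
    rw [← hGdef] at this
    have e := ks_quad x Finset.univ (G *ᵥ x i)
    rw [← hX] at e
    rw [e] at this
    exact this
  have hτ : 0 < ∑ i, q i := by
    obtain ⟨i, hi⟩ := hne
    have hpi : 0 < p i := by simpa using hG.dotProduct_mulVec_pos hi
    have h1 : (p i) ^ 2 ≤ q i :=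
      Finset.single_le_sum (f := fun j => (x j ⬝ᵥ G *ᵥ x i) ^ 2) (fun j _ => sq_nonneg _)
        (Finset.mem_univ i)
    have h2 : q i ≤ ∑ i, q i := Finset.single_le_sum (fun j _ => hq0 j) (Finset.mem_univ i)
    have := pow_pos hpi 2
    linarith
  set τ := ∑ i, q i with hτd
  have key : ∃ i ∈ R, q i + δ * τ * p i < δ * τ := by
    by_contra hcon
    push Not at hcon
    have h1 : ∑ i ∈ R, δ * τ ≤ ∑ i ∈ R, (q i + δ * τ * p i) := Finset.sum_le_sum hcon
    rw [Finset.sum_const, nsmul_eq_mul, Finset.sum_add_distrib, ← Finset.mul_sum] at h1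
    have h2 : ∑ i ∈ R, q i ≤ τ :=
      Finset.sum_le_sum_of_subset_of_nonneg (Finset.subset_univ _) fun i _ _ => hq0 i
    have h3 : ∑ i ∈ R, p i ≤ ∑ i, p i :=
      Finset.sum_le_sum_of_subset_of_nonneg (Finset.subset_univ _) fun i _ _ => hp0 i
    have h4 : ∑ i ∈ R, p i ≤ Φ := by nlinarith
    have h5 : 0 < δ * τ := by positivity
    have h6 : δ * τ * ∑ i ∈ R, p i ≤ δ * τ * Φ := mul_le_mul_of_nonneg_left h4 h5.le
    have h7 := mul_lt_mul_of_pos_left hR h5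
    have h8 : δ * τ * (1 / δ + Φ) = τ + δ * τ * Φ := by field_simp
    linarith
  obtain ⟨i, hiR, hi⟩ := key
  have h5 : 0 < δ * τ := by positivity
  have hpi : p i < 1 := by
    have := hq0 i
    by_contra hc
    push Not at hc
    nlinarith
  obtain ⟨hPD, hinv⟩ := ks_sherman (M + δ • X) G hG hMG (x i) hpi
  refine ⟨i, hiR, ?_, ?_⟩
  · have : M + δ • X - vecMulVec (x i) (x i) = _ := (inv_eq_left_inv hinv).symm
    rw [this]; exact hPD.inv
  · rw [inv_eq_right_inv hinv]
    have hj : ∀ j, x j ⬝ᵥ (G + (1 - x i ⬝ᵥ G *ᵥ x i)⁻¹ • vecMulVec (G *ᵥ x i) (G *ᵥ x i)) *ᵥ x j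
        = p j + (1 - p i)⁻¹ * (x j ⬝ᵥ G *ᵥ x i) ^ 2 := by
      intro j
      rw [add_mulVec, dotProduct_add, smul_mulVec, dotProduct_smul, vecMulVec_mulVec]
      simp [dotProduct_comm (G *ᵥ x i) (x j), sq, p]
    rw [Finset.sum_congr rfl fun j _ => hj j, Finset.sum_add_distrib, ← Finset.mul_sum]
    have h9 : (1 - p i)⁻¹ * q i ≤ δ * τ := by
      rw [inv_mul_le_iff₀ (by linarith)]; linarith
    change ∑ j, p j + (1 - p i)⁻¹ * q i ≤ Φ
    linarith

open Matrix in
lemma ks_iter {d n : ℕ} (x : Fin n → Fin d → ℝ) (hx : ∀ i, x i ⬝ᵥ x i ≤ 1)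
    (hne : ∃ i, x i ≠ 0) (t : ℕ) (ht : (t : ℝ) < 15 / 16 * n) :
    ∃ T : Finset (Fin n), T.card = t ∧
      ((16 : ℝ) • (1 : Matrix (Fin d) (Fin d) ℝ) +
        (Real.log (15 / 16 * n) - Real.log (15 / 16 * n - t)) • (∑ i, vecMulVec (x i) (x i))
        - ∑ i ∈ T, vecMulVec (x i) (x i)).PosDef ∧
      ∑ j, x j ⬝ᵥ ((16 : ℝ) • (1 : Matrix (Fin d) (Fin d) ℝ) +
        (Real.log (15 / 16 * n) - Real.log (15 / 16 * n - t)) • (∑ i, vecMulVec (x i) (x i))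
        - ∑ i ∈ T, vecMulVec (x i) (x i))⁻¹ *ᵥ x j ≤ n / 16 := by
  induction t with
  | zero =>
    refine ⟨∅, rfl, ?_, ?_⟩
    · simpa using (PosDef.one (n := Fin d) (R := ℝ)).smul (by norm_num : (0:ℝ) < 16)
    · have : ((16 : ℝ) • (1 : Matrix (Fin d) (Fin d) ℝ))⁻¹ = (1/16 : ℝ) • 1 := by
        apply inv_eq_right_inv
        rw [smul_mul_smul_comm, mul_one]; norm_num
      simp only [Nat.cast_zero, sub_zero, sub_self, zero_smul, add_zero, Finset.sum_empty, this,
        smul_mulVec, one_mulVec, dotProduct_smul, smul_eq_mul]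
      calc ∑ j, 1 / 16 * (x j ⬝ᵥ x j) ≤ ∑ j : Fin n, (1 / 16 : ℝ) :=
            Finset.sum_le_sum fun j _ => by linarith [hx j]
        _ = n / 16 := by simp; ring
  | succ t ih =>
    push_cast at ht ⊢
    obtain ⟨T, hT, hPD, hΦ⟩ := ih (by linarith)
    set c : ℝ := 15 / 16 * n with hc
    have hct : 0 < c - (t + 1) := by linarith
    have hlog : 1 / (c - t) < Real.log (c - t) - Real.log (c - (t + 1)) := by
      have hpos : 0 < (c - (t+1)) / (c - t) := div_pos hct (by linarith)
      have hne1 : (c - (t+1)) / (c - t) ≠ 1 := by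
        intro h
        rw [div_eq_one_iff_eq (by linarith)] at h
        linarith
      have := Real.log_lt_sub_one_of_pos hpos hne1
      rw [Real.log_div hct.ne' (by linarith)] at this
      have e : (c - (t+1)) / (c - t) - 1 = - (1 / (c - t)) := by
        have : c - t ≠ 0 := by linarith
        field_simp; ring
      linarith
    set δ := Real.log (c - t) - Real.log (c - (t + 1)) with hδ
    have hct' : 0 < c - t := by linarith
    have hδ0 : 0 < δ := lt_trans (by positivity) hlog
    obtain ⟨i, hi, h1, h2⟩ := ks_step x _ hPD hne δ hδ0 Tᶜ (by
      have h3 : 1 / δ < c - t := by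
        rw [div_lt_iff₀ hct'] at hlog
        rw [div_lt_iff₀ hδ0]; linarith
      have h4 : ((Tᶜ).card : ℝ) = n - t := by
        rw [Finset.card_compl, Nat.cast_sub (Finset.card_le_univ T), hT]; simp
      rw [h4]
      linarith)
    have hiT : i ∉ T := by simpa using hi
    have e : (16 : ℝ) • (1 : Matrix (Fin d) (Fin d) ℝ) +
        (Real.log c - Real.log (c - t)) • (∑ i, vecMulVec (x i) (x i))
        - ∑ i ∈ T, vecMulVec (x i) (x i) + δ • (∑ i, vecMulVec (x i) (x i)) - vecMulVec (x i) (x i)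
        = (16 : ℝ) • (1 : Matrix (Fin d) (Fin d) ℝ) +
        (Real.log c - Real.log (c - (t + 1))) • (∑ i, vecMulVec (x i) (x i))
        - ∑ i ∈ insert i T, vecMulVec (x i) (x i) := by
      rw [Finset.sum_insert hiT, hδ]
      module
    rw [e] at h1 h2
    exact ⟨insert i T, by rw [Finset.card_insert_of_notMem hiT, hT], h1, h2.trans hΦ⟩

open Matrix in
/-- **Kadison–Singer data-splitting lemma.** Given `x₁,…,xₙ ∈ ℝ^d` with `‖xᵢ‖₂ ≤ 1` and
`Σ = 18·I + ∑ᵢ xᵢxᵢᵀ`, there is a subset `S ⊆ [n]` with `|S| ≤ n/2` such that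
`18·I + ∑_{i∈S} xᵢxᵢᵀ ⪰ Σ/9` in the Loewner order. -/
theorem kadison_singer_data_splitting
    (d n : ℕ) (x : Fin n → Fin d → ℝ)
    (hx : ∀ i, Real.sqrt (∑ j, x i j ^ 2) ≤ 1) :
    ∃ S : Finset (Fin n), 2 * S.card ≤ n ∧
      (((18 : ℝ) • (1 : Matrix (Fin d) (Fin d) ℝ) + ∑ i ∈ S, vecMulVec (x i) (x i))
        - (1 / 9 : ℝ) •
          ((18 : ℝ) • (1 : Matrix (Fin d) (Fin d) ℝ) +
            ∑ i : Fin n, vecMulVec (x i) (x i))).PosSemidef := by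
  have hx' : ∀ i, x i ⬝ᵥ x i ≤ 1 := by
    intro i
    have h := (Real.sqrt_le_one).1 (hx i)
    simpa [dotProduct, sq] using h
  have hherm : ∀ S : Finset (Fin n),
      (((18 : ℝ) • (1 : Matrix (Fin d) (Fin d) ℝ) + ∑ i ∈ S, vecMulVec (x i) (x i))
        - (1 / 9 : ℝ) •
          ((18 : ℝ) • (1 : Matrix (Fin d) (Fin d) ℝ) +
            ∑ i : Fin n, vecMulVec (x i) (x i))).IsHermitian := by
    intro S
    have h1 := (ks_psd x S).isHermitian
    have h2 := (ks_psd x Finset.univ).isHermitian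
    unfold Matrix.IsHermitian at *
    simp only [conjTranspose_sub, conjTranspose_add, conjTranspose_smul, h1, h2,
      conjTranspose_one, star_trivial]
  have hquad : ∀ (S : Finset (Fin n)) (z : Fin d → ℝ),
      z ⬝ᵥ (((18 : ℝ) • (1 : Matrix (Fin d) (Fin d) ℝ) + ∑ i ∈ S, vecMulVec (x i) (x i))
        - (1 / 9 : ℝ) •
          ((18 : ℝ) • (1 : Matrix (Fin d) (Fin d) ℝ) +
            ∑ i : Fin n, vecMulVec (x i) (x i))) *ᵥ z
      = 16 * (z ⬝ᵥ z) + ∑ i ∈ S, (x i ⬝ᵥ z) ^ 2 - 1 / 9 * ∑ i, (x i ⬝ᵥ z) ^ 2 := by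
    intro S z
    simp only [sub_mulVec, add_mulVec, smul_mulVec, one_mulVec, dotProduct_sub, dotProduct_add,
      dotProduct_smul, smul_eq_mul, ks_quad]
    ring
  by_cases hcase : (∀ i, x i = 0) ∨ n < 24
  · refine ⟨∅, by simp, PosSemidef.of_dotProduct_mulVec_nonneg (hherm _) fun z => ?_⟩
    rw [star_trivial, hquad]
    have hz : 0 ≤ z ⬝ᵥ z := by
      simpa using dotProduct_star_self_nonneg z
    simp only [Finset.sum_empty, add_zero]
    rcases hcase with h | h
    · simp [h, hz]
    · have hcs : ∀ i, (x i ⬝ᵥ z) ^ 2 ≤ z ⬝ᵥ z := by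
        intro i
        have h1 : (x i ⬝ᵥ z) ^ 2 ≤ (∑ j, x i j ^ 2) * (∑ j, z j ^ 2) :=
          Finset.sum_mul_sq_le_sq_mul_sq _ _ _
        have h2 : ∑ j, x i j ^ 2 ≤ 1 := (Real.sqrt_le_one).1 (hx i)
        have h3 : ∑ j, z j ^ 2 = z ⬝ᵥ z := by simp [dotProduct, sq]
        rw [h3] at h1
        nlinarith
      have h4 : ∑ i, (x i ⬝ᵥ z) ^ 2 ≤ n * (z ⬝ᵥ z) := by
        calc _ ≤ ∑ i : Fin n, z ⬝ᵥ z := Finset.sum_le_sum fun i _ => hcs i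
          _ = _ := by simp
      have h5 : (n : ℝ) < 24 := by exact_mod_cast h
      nlinarith
  · push Not at hcase
    obtain ⟨hne, hn⟩ := hcase
    have hn' : (24 : ℝ) ≤ n := by exact_mod_cast hn
    have hm : ((n - n / 2 : ℕ) : ℝ) ≤ (n + 1) / 2 := by
      have : 2 * (n - n / 2) ≤ n + 1 := by omega
      have : (2 * (n - n / 2 : ℕ) : ℝ) ≤ n + 1 := by exact_mod_cast this
      linarith
    obtain ⟨T, hT, hPD, -⟩ := ks_iter x hx' hne (n - n / 2) (by linarith)
    set v := Real.log (15 / 16 * n) - Real.log (15 / 16 * n - (n - n / 2 : ℕ)) with hv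
    have hv8 : v ≤ 8 / 9 := by
      have hp : (0:ℝ) < 15 / 16 * n - (n - n / 2 : ℕ) := by linarith
      rw [hv, ← Real.log_div (by positivity) hp.ne']
      rw [Real.log_le_iff_le_exp (div_pos (by positivity) hp)]
      have he := Real.quadratic_le_exp_of_nonneg (x := 8 / 9) (by norm_num)
      refine le_trans ?_ he
      rw [div_le_iff₀ hp]
      nlinarith
    refine ⟨Tᶜ, ?_, PosSemidef.of_dotProduct_mulVec_nonneg (hherm _) fun z => ?_⟩
    · rw [Finset.card_compl, hT, Fintype.card_fin]; omega
    · rw [star_trivial, hquad]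
      have h := hPD.posSemidef.dotProduct_mulVec_nonneg z
      simp only [star_trivial, sub_mulVec, add_mulVec, smul_mulVec, one_mulVec, dotProduct_sub,
        dotProduct_add, dotProduct_smul, smul_eq_mul, ks_quad] at h
      have hs := Finset.sum_add_sum_compl T (fun i => (x i ⬝ᵥ z) ^ 2)
      have h0 : 0 ≤ ∑ i, (x i ⬝ᵥ z) ^ 2 := Finset.sum_nonneg fun i _ => sq_nonneg _
      nlinarith
end

section
/- Let G : [0,1] → [0,1] be nondecreasing and let v₀ ≤ v₁ be real numbers. Suppose the set of maximizers of b ↦ G(b)(v₀ − b) over [0,1] and the set of maximizers of b ↦ G(b)(v₁ − b) over [0,1] are both nonempty, and let b₀ and b₁ respectively be the greatest elements of these two sets of maximizers. Then b₀ ≤ b₁. The same conclusion b₀ ≤ b₁ holds if instead b₀ and b₁ are the least elements of the respective sets of maximizers. -/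
/-- **Monotonicity of the optimal bid in the value.** Let `G : [0,1] → [0,1]` be
nondecreasing and `v₀ ≤ v₁`. If `b₀` and `b₁` are the greatest (respectively, the least)
maximizers over `[0,1]` of `b ↦ G(b)(v₀ − b)` and `b ↦ G(b)(v₁ − b)`, then `b₀ ≤ b₁`. -/
theorem monotone_optimal_bid
    (G : ℝ → ℝ)
    (hmono : MonotoneOn G (Set.Icc (0 : ℝ) 1))
    (hmaps : ∀ x ∈ Set.Icc (0 : ℝ) 1, G x ∈ Set.Icc (0 : ℝ) 1)
    (v0 v1 : ℝ) (hv : v0 ≤ v1)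
    (b0 b1 : ℝ)
    (h : (IsGreatest {b | b ∈ Set.Icc (0 : ℝ) 1 ∧
            ∀ b' ∈ Set.Icc (0 : ℝ) 1, G b' * (v0 - b') ≤ G b * (v0 - b)} b0 ∧
          IsGreatest {b | b ∈ Set.Icc (0 : ℝ) 1 ∧
            ∀ b' ∈ Set.Icc (0 : ℝ) 1, G b' * (v1 - b') ≤ G b * (v1 - b)} b1) ∨
         (IsLeast {b | b ∈ Set.Icc (0 : ℝ) 1 ∧
            ∀ b' ∈ Set.Icc (0 : ℝ) 1, G b' * (v0 - b') ≤ G b * (v0 - b)} b0 ∧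
          IsLeast {b | b ∈ Set.Icc (0 : ℝ) 1 ∧
            ∀ b' ∈ Set.Icc (0 : ℝ) 1, G b' * (v1 - b') ≤ G b * (v1 - b)} b1)) :
    b0 ≤ b1 := by
  by_contra! hlt
  rcases h with ⟨⟨⟨m0, o0⟩, _⟩, ⟨⟨m1, o1⟩, u1⟩⟩ | ⟨⟨⟨m0, o0⟩, u0⟩, ⟨⟨m1, o1⟩, _⟩⟩
  · have hp := mul_nonneg (sub_nonneg.2 (hmono m1 m0 hlt.le)) (sub_nonneg.2 hv)
    have := o0 b1 m1
    have hle : b0 ≤ b1 := u1 ⟨m0, fun b' hb' => (o1 b' hb').trans (by linarith)⟩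
    linarith
  · have hp := mul_nonneg (sub_nonneg.2 (hmono m1 m0 hlt.le)) (sub_nonneg.2 hv)
    have := o1 b0 m0
    have hle : b0 ≤ b1 := u0 ⟨m1, fun b' hb' => (o0 b' hb').trans (by linarith)⟩
    linarith
end

section
/- Let L ≥ 1, let G : [0,1] → [0,1] be a nondecreasing L-Lipschitz function, and let Ĝ : [0,1] → [0,1] be a nondecreasing right-continuous function with sup_{x∈[0,1]} |G(x) − Ĝ(x)| ≤ 0.1. Let 0 ≤ v₁ ≤ v₂ ≤ 1 with v₂ − v₁ ≤ 1/(20L), and suppose b₁ and b₂ are the greatest maximizers of b ↦ Ĝ(b)(v₁ − b) and b ↦ Ĝ(b)(v₂ − b) over [0,1], respectively (the maxima being attained). Then Ĝ(b₂) − Ĝ(b₁) ≤ 1 − 1/(20L). -/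
/-- **Win probabilities of optimal bids for nearby values cannot span `[0,1]`.**
Let `L ≥ 1`, `G : [0,1] → [0,1]` nondecreasing and `L`-Lipschitz, `Ĝ : [0,1] → [0,1]`
nondecreasing, right-continuous, with `|G − Ĝ| ≤ 0.1` uniformly on `[0,1]`. If
`0 ≤ v₁ ≤ v₂ ≤ 1` with `v₂ − v₁ ≤ 1/(20L)` and `b₁, b₂` are the greatest maximizers of
`b ↦ Ĝ(b)(v₁ − b)` and `b ↦ Ĝ(b)(v₂ − b)` over `[0,1]`, then
`Ĝ(b₂) − Ĝ(b₁) ≤ 1 − 1/(20L)`. -/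
theorem approx_cdf_ucb_lipschitz
    (L : ℝ) (hL : 1 ≤ L)
    (G Ghat : ℝ → ℝ)
    (hGmono : MonotoneOn G (Set.Icc (0 : ℝ) 1))
    (hGmaps : ∀ x ∈ Set.Icc (0 : ℝ) 1, G x ∈ Set.Icc (0 : ℝ) 1)
    (hGlip : ∀ x ∈ Set.Icc (0 : ℝ) 1, ∀ y ∈ Set.Icc (0 : ℝ) 1, |G x - G y| ≤ L * |x - y|)
    (hHmono : MonotoneOn Ghat (Set.Icc (0 : ℝ) 1))
    (hHmaps : ∀ x ∈ Set.Icc (0 : ℝ) 1, Ghat x ∈ Set.Icc (0 : ℝ) 1)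
    (hHrc : ∀ x ∈ Set.Ico (0 : ℝ) 1, ContinuousWithinAt Ghat (Set.Ici x) x)
    (hclose : ∀ x ∈ Set.Icc (0 : ℝ) 1, |G x - Ghat x| ≤ 0.1)
    (v1 v2 : ℝ) (hv1 : 0 ≤ v1) (hv12 : v1 ≤ v2) (hv2 : v2 ≤ 1)
    (hgap : v2 - v1 ≤ 1 / (20 * L))
    (b1 b2 : ℝ)
    (hb1 : IsGreatest {b | b ∈ Set.Icc (0 : ℝ) 1 ∧
      ∀ b' ∈ Set.Icc (0 : ℝ) 1, Ghat b' * (v1 - b') ≤ Ghat b * (v1 - b)} b1)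
    (hb2 : IsGreatest {b | b ∈ Set.Icc (0 : ℝ) 1 ∧
      ∀ b' ∈ Set.Icc (0 : ℝ) 1, Ghat b' * (v2 - b') ≤ Ghat b * (v2 - b)} b2) :
    Ghat b2 - Ghat b1 ≤ 1 - 1 / (20 * L) := by
  by_contra hcon
  push Not at hcon
  obtain ⟨⟨hb1m, hb1o⟩, -⟩ := hb1
  obtain ⟨⟨hb2m, hb2o⟩, -⟩ := hb2
  have hL0 : 0 < L := by linarith
  obtain ⟨d, hd⟩ : ∃ d : ℝ, d = 1 / (20 * L) := ⟨_, rfl⟩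
  rw [← hd] at hcon hgap
  have hLd : L * d = 1 / 20 := by rw [hd]; field_simp
  have hd0 : 0 < d := by rw [hd]; positivity
  have hd1 : d ≤ 1 / 20 := by nlinarith
  obtain ⟨h10, h11⟩ := hHmaps b1 hb1m
  obtain ⟨h20, h21⟩ := hHmaps b2 hb2m
  have hlt : b1 < b2 := by
    by_contra h
    have := hHmono hb2m hb1m (not_lt.mp h)
    linarith
  have c1 := abs_le.mp (hclose b1 hb1m)
  have c2 := abs_le.mp (hclose b2 hb2m)
  norm_num at c1 c2
  have l12 := hGlip b2 hb2m b1 hb1m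
  rw [abs_of_pos (sub_pos.mpr hlt)] at l12
  have l12' := (abs_le.mp l12).2
  have hfar : 7 * d ≤ b2 - b1 := by
    by_contra h
    have := mul_lt_mul_of_pos_left (not_le.mp h) hL0
    nlinarith
  have hbm : b2 - 7 * d ∈ Set.Icc (0:ℝ) 1 :=
    ⟨by linarith [hb1m.1], by linarith [hb2m.2]⟩
  have c3 := abs_le.mp (hclose _ hbm)
  norm_num at c3
  have l3 := hGlip b2 hb2m _ hbm
  have e : b2 - (b2 - 7 * d) = 7 * d := by ring
  rw [e, abs_of_pos (show 0 < 7 * d by linarith)] at l3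
  have l3' := (abs_le.mp l3).2
  have hc : (2:ℝ) / 5 ≤ Ghat (b2 - 7 * d) := by nlinarith
  have hu : 0 ≤ v2 - b2 := by
    have := hb2o v2 ⟨by linarith, hv2⟩
    rw [sub_self, mul_zero] at this
    by_contra h
    have : Ghat b2 * (v2 - b2) < 0 := mul_neg_of_pos_of_neg (by linarith) (not_le.mp h)
    linarith
  have o2 := hb2o _ hbm
  have p1 : Ghat b2 * (v2 - b2) ≤ 1 * (v2 - b2) := mul_le_mul_of_nonneg_right h21 hu
  have p2 : 2 / 5 * (v2 - (b2 - 7 * d)) ≤ Ghat (b2 - 7 * d) * (v2 - (b2 - 7 * d)) :=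
    mul_le_mul_of_nonneg_right hc (by linarith)
  have hv : 3 * d ≤ v1 - b2 := by linarith
  have o1 := hb1o b2 hb2m
  have p3 : (1/2) * (v1 - b2) ≤ Ghat b2 * (v1 - b2) :=
    mul_le_mul_of_nonneg_right (by linarith) (by linarith)
  have p4 : Ghat b1 * (v1 - b1) ≤ Ghat b1 * 1 :=
    mul_le_mul_of_nonneg_left (by linarith [hb1m.1]) h10
  linarith
end

section
/- Let M be a real-valued random variable with cumulative distribution function G(x) = P(M ≤ x), and let v₁, v₀ be random variables taking values in [0,1] such that the pair (v₁, v₀) is independent of M. Fix b ∈ ℝ, δ ∈ (0,1), and ĝ ∈ (0,1) with |ĝ − G(b)| ≤ δ·√(G(b)(1−G(b))) + δ². Define the truncated inverse-propensity-weighted estimator ẽ = 1[M ≤ b]·v₁ / max{δ², ĝ} − 1[M > b]·v₀ / max{δ², 1−ĝ}, and set σ = 1/√(ĝ(1−ĝ)). Then |E[ẽ] − E[v₁ − v₀]| ≤ 20√6 · δ · σ. -/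
lemma ipw_aux (g h δ : ℝ) (hg0 : 0 ≤ g) (hg1 : g ≤ 1) (hδ : 0 < δ) (h0 : 0 < h) (h1 : h < 1)
    (hest : |h - g| ≤ δ * Real.sqrt (g * (1 - g)) + δ ^ 2) :
    |g / max (δ ^ 2) h - 1| ≤ 3 * δ / Real.sqrt (h * (1 - h)) := by
  have hr : 0 < Real.sqrt (h * (1 - h)) := Real.sqrt_pos.2 (mul_pos h0 (by linarith))
  have hrh : Real.sqrt (h * (1 - h)) ≤ Real.sqrt h := Real.sqrt_le_sqrt (by nlinarith)
  have hsg : Real.sqrt (g * (1 - g)) ≤ Real.sqrt g := Real.sqrt_le_sqrt (by nlinarith)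
  have hest' : |h - g| ≤ δ * Real.sqrt g + δ ^ 2 :=
    hest.trans (by nlinarith)
  have hs2 := Real.sq_sqrt hg0
  have ht2 := Real.sq_sqrt h0.le
  have hs0 := Real.sqrt_nonneg g
  have ht0 : 0 < Real.sqrt h := Real.sqrt_pos.2 h0
  set r := Real.sqrt (h * (1 - h))
  set s := Real.sqrt g
  set t := Real.sqrt h
  have hm : 0 < max (δ ^ 2) h := lt_max_of_lt_right h0
  have e : g / max (δ ^ 2) h - 1 = (g - max (δ ^ 2) h) / max (δ ^ 2) h := by
    field_simp
  rw [e, abs_div, abs_of_pos hm, div_le_div_iff₀ hm hr]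
  have ha := abs_le.1 hest'
  rcases le_total (δ ^ 2) h with hc | hc
  · rw [max_eq_right hc]
    have hdt : δ ≤ t := Real.le_sqrt_of_sq_le hc
    have hst : s ≤ 2 * t := by
      by_contra! hcon
      nlinarith
    have hb : |g - h| ≤ 3 * δ * t := by
      rw [abs_sub_comm]
      refine hest'.trans ?_
      nlinarith
    calc |g - h| * r ≤ (3 * δ * t) * t := by gcongr
      _ = 3 * δ * h := by rw [← ht2]; ring
  · rw [max_eq_left hc]
    have hdt : t ≤ δ := Real.sqrt_le_iff.2 ⟨hδ.le, hc⟩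
    have hst : s ≤ 2 * δ := by
      by_contra! hcon
      nlinarith
    have hb : |g - δ ^ 2| ≤ 3 * δ ^ 2 := by
      rw [abs_le]
      constructor <;> nlinarith
    calc |g - δ ^ 2| * r ≤ (3 * δ ^ 2) * δ := by
          gcongr
          exact hrh.trans hdt
      _ = 3 * δ * δ ^ 2 := by ring

open MeasureTheory ProbabilityTheory in
lemma ipw_int {Ω : Type*} [MeasurableSpace Ω] (μ : Measure Ω) [IsProbabilityMeasure μ]
    (M v : Ω → ℝ) (hM : Measurable M) (hv : Measurable v)
    (hi : IndepFun v M μ) (S : Set ℝ) (hS : MeasurableSet S) (c : ℝ) :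
    ∫ ω, (M ⁻¹' S).indicator (fun ω => v ω / c) ω ∂μ = (∫ ω, v ω ∂μ) * (μ.real (M ⁻¹' S) / c) := by
  have hf : Measurable (S.indicator (fun _ => (1 : ℝ))) := measurable_const.indicator hS
  have h2 := (hi.comp measurable_id hf).integral_fun_mul_eq_mul_integral
    hv.aestronglyMeasurable (hf.comp hM).aestronglyMeasurable
  have h3 : ∫ ω, (S.indicator (fun _ => (1 : ℝ)) ∘ M) ω ∂μ = μ.real (M ⁻¹' S) := by
    have : (S.indicator (fun _ => (1 : ℝ)) ∘ M) = (M ⁻¹' S).indicator 1 := by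
      ext ω; by_cases h : M ω ∈ S <;> simp [h]
    rw [this, integral_indicator_one (hM hS)]
  rw [h3] at h2
  rw [← mul_div_assoc]
  simp only [id, Function.comp_def] at h2
  rw [← h2, ← integral_div]
  congr 1
  ext ω
  by_cases h : M ω ∈ S <;> simp [h]

open MeasureTheory ProbabilityTheory in
/-- **Bias of the truncated inverse-propensity-weighted estimator.** Let `M` be a random
variable with CDF `G`, and `v₁, v₀ ∈ [0,1]` random variables with `(v₁, v₀)` independent of
`M`. For a bid `b`, truncation level `δ ∈ (0,1)`, and estimated propensity `ĝ ∈ (0,1)` with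
`|ĝ − G(b)| ≤ δ√(G(b)(1−G(b))) + δ²`, the truncated IPW estimator
`ẽ = 1[M ≤ b]v₁/max{δ², ĝ} − 1[M > b]v₀/max{δ², 1−ĝ}` satisfies
`|E[ẽ] − E[v₁ − v₀]| ≤ 20√6·δ·σ` with `σ = 1/√(ĝ(1−ĝ))`. -/
theorem truncated_ipw_bias
    {Ω : Type*} [MeasurableSpace Ω] (μ : Measure Ω) [IsProbabilityMeasure μ]
    (M v1 v0 : Ω → ℝ)
    (hMmeas : Measurable M) (hv1meas : Measurable v1) (hv0meas : Measurable v0)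
    (hv1r : ∀ ω, v1 ω ∈ Set.Icc (0 : ℝ) 1) (hv0r : ∀ ω, v0 ω ∈ Set.Icc (0 : ℝ) 1)
    (hindep : IndepFun (fun ω => (v1 ω, v0 ω)) M μ)
    (b : ℝ) (δ : ℝ) (hδ : δ ∈ Set.Ioo (0 : ℝ) 1)
    (ghat : ℝ) (hghat : ghat ∈ Set.Ioo (0 : ℝ) 1)
    (g : ℝ) (hg : g = (μ {ω | M ω ≤ b}).toReal)
    (hest : |ghat - g| ≤ δ * Real.sqrt (g * (1 - g)) + δ ^ 2) :
    |(∫ ω, ((if M ω ≤ b then v1 ω / max (δ ^ 2) ghat else 0)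
          - (if b < M ω then v0 ω / max (δ ^ 2) (1 - ghat) else 0)) ∂μ)
        - ∫ ω, (v1 ω - v0 ω) ∂μ|
      ≤ 20 * Real.sqrt 6 * δ * (1 / Real.sqrt (ghat * (1 - ghat))) := by
  have hi1 : IndepFun v1 M μ := hindep.comp measurable_fst measurable_id
  have hi0 : IndepFun v0 M μ := hindep.comp measurable_snd measurable_id
  have I1 : Integrable v1 μ := Integrable.of_bound hv1meas.aestronglyMeasurable 1
    (Filter.Eventually.of_forall fun ω => by
      rw [Real.norm_eq_abs, abs_of_nonneg (hv1r ω).1]; exact (hv1r ω).2)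
  have I0 : Integrable v0 μ := Integrable.of_bound hv0meas.aestronglyMeasurable 1
    (Filter.Eventually.of_forall fun ω => by
      rw [Real.norm_eq_abs, abs_of_nonneg (hv0r ω).1]; exact (hv0r ω).2)
  have mA : MeasurableSet (M ⁻¹' Set.Iic b) := hMmeas measurableSet_Iic
  have mB : MeasurableSet (M ⁻¹' Set.Ioi b) := hMmeas measurableSet_Ioi
  have e1 := ipw_int μ M v1 hMmeas hv1meas hi1 (Set.Iic b) measurableSet_Iic (max (δ ^ 2) ghat)
  have e0 := ipw_int μ M v0 hMmeas hv0meas hi0 (Set.Ioi b) measurableSet_Ioi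
    (max (δ ^ 2) (1 - ghat))
  have hgA : μ.real (M ⁻¹' Set.Iic b) = g := hg.symm
  have hgB : μ.real (M ⁻¹' Set.Ioi b) = 1 - g := by
    rw [← hgA, ← probReal_compl_eq_one_sub mA, ← Set.preimage_compl, Set.compl_Iic]
  have hg0 : 0 ≤ g := by rw [← hgA]; exact measureReal_nonneg
  have hg1 : g ≤ 1 := by rw [← hgA]; exact measureReal_le_one
  rw [hgA] at e1
  rw [hgB] at e0
  have E : (∫ ω, ((if M ω ≤ b then v1 ω / max (δ ^ 2) ghat else 0)
          - (if b < M ω then v0 ω / max (δ ^ 2) (1 - ghat) else 0)) ∂μ)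
      = (∫ ω, v1 ω ∂μ) * (g / max (δ ^ 2) ghat)
        - (∫ ω, v0 ω ∂μ) * ((1 - g) / max (δ ^ 2) (1 - ghat)) := by
    rw [← e1, ← e0, ← integral_sub ((I1.div_const _).indicator mA) ((I0.div_const _).indicator mB)]
    congr 1
  rw [E, integral_sub I1 I0]
  have a1 := ipw_aux g ghat δ hg0 hg1 hδ.1 hghat.1 hghat.2 hest
  have a0 := ipw_aux (1 - g) (1 - ghat) δ (by linarith) (by linarith) hδ.1
    (by linarith [hghat.2]) (by linarith [hghat.1]) (by
      have q1 : (1 - ghat) - (1 - g) = -(ghat - g) := by ring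
      have q2 : (1 - g) * (1 - (1 - g)) = g * (1 - g) := by ring
      rw [q1, q2, abs_neg]; exact hest)
  have q3 : (1 - ghat) * (1 - (1 - ghat)) = ghat * (1 - ghat) := by ring
  rw [q3] at a0
  have p1 : 0 ≤ ∫ ω, v1 ω ∂μ := integral_nonneg fun ω => (hv1r ω).1
  have p0 : 0 ≤ ∫ ω, v0 ω ∂μ := integral_nonneg fun ω => (hv0r ω).1
  have l1 : ∫ ω, v1 ω ∂μ ≤ 1 := by
    have := integral_mono I1 (integrable_const (1 : ℝ)) fun ω => (hv1r ω).2
    simpa using this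
  have l0 : ∫ ω, v0 ω ∂μ ≤ 1 := by
    have := integral_mono I0 (integrable_const (1 : ℝ)) fun ω => (hv0r ω).2
    simpa using this
  set x := ∫ ω, v1 ω ∂μ
  set y := ∫ ω, v0 ω ∂μ
  set A := g / max (δ ^ 2) ghat
  set B := (1 - g) / max (δ ^ 2) (1 - ghat)
  set r := Real.sqrt (ghat * (1 - ghat))
  have hK : 0 ≤ δ / r := div_nonneg hδ.1.le (Real.sqrt_nonneg _)
  have h6 : 1 ≤ Real.sqrt 6 := Real.one_le_sqrt.2 (by norm_num)
  have q4 : x * A - y * B - (x - y) = x * (A - 1) - y * (B - 1) := by ring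
  rw [q4]
  calc |x * (A - 1) - y * (B - 1)| ≤ |x * (A - 1)| + |y * (B - 1)| := abs_sub _ _
    _ = x * |A - 1| + y * |B - 1| := by
        rw [abs_mul, abs_mul, abs_of_nonneg p1, abs_of_nonneg p0]
    _ ≤ 1 * (3 * δ / r) + 1 * (3 * δ / r) := by gcongr
    _ = 6 * (δ / r) := by ring
    _ ≤ (20 * Real.sqrt 6) * (δ / r) := by gcongr; linarith
    _ = 20 * Real.sqrt 6 * δ * (1 / r) := by ring
end

section
/- Let M be a real-valued random variable with cumulative distribution function G(x) = P(M ≤ x), and let v₁, v₀ be random variables taking values in [0,1] such that the pair (v₁, v₀) is independent of M. Fix b ∈ ℝ, δ ∈ (0,1), and ĝ ∈ (0,1) with |ĝ − G(b)| ≤ δ·√(G(b)(1−G(b))) + δ². Define the truncated inverse-propensity-weighted estimator ẽ = 1[M ≤ b]·v₁ / max{δ², ĝ} − 1[M > b]·v₀ / max{δ², 1−ĝ}. Then Var(ẽ) ≤ 16·max{1/ĝ, 1/(1−ĝ)} ≤ 16/(ĝ(1−ĝ)). -/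
open MeasureTheory ProbabilityTheory in
/-- **Variance of the truncated inverse-propensity-weighted estimator.** In the setting of
the bias lemma, the truncated IPW estimator
`ẽ = 1[M ≤ b]v₁/max{δ², ĝ} − 1[M > b]v₀/max{δ², 1−ĝ}` satisfies
`Var(ẽ) ≤ 16·max{1/ĝ, 1/(1−ĝ)} ≤ 16/(ĝ(1−ĝ))`. -/
theorem truncated_ipw_variance
    {Ω : Type*} [MeasurableSpace Ω] (μ : Measure Ω) [IsProbabilityMeasure μ]
    (M v1 v0 : Ω → ℝ)
    (hMmeas : Measurable M) (hv1meas : Measurable v1) (hv0meas : Measurable v0)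
    (hv1r : ∀ ω, v1 ω ∈ Set.Icc (0 : ℝ) 1) (hv0r : ∀ ω, v0 ω ∈ Set.Icc (0 : ℝ) 1)
    (hindep : IndepFun (fun ω => (v1 ω, v0 ω)) M μ)
    (b : ℝ) (δ : ℝ) (hδ : δ ∈ Set.Ioo (0 : ℝ) 1)
    (ghat : ℝ) (hghat : ghat ∈ Set.Ioo (0 : ℝ) 1)
    (g : ℝ) (hg : g = (μ {ω | M ω ≤ b}).toReal)
    (hest : |ghat - g| ≤ δ * Real.sqrt (g * (1 - g)) + δ ^ 2) :
    variance (fun ω => (if M ω ≤ b then v1 ω / max (δ ^ 2) ghat else 0)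
        - (if b < M ω then v0 ω / max (δ ^ 2) (1 - ghat) else 0)) μ
      ≤ 16 * max (1 / ghat) (1 / (1 - ghat)) ∧
    16 * max (1 / ghat) (1 / (1 - ghat)) ≤ 16 / (ghat * (1 - ghat)) := by
  obtain ⟨hd0, hd1⟩ := hδ
  obtain ⟨h0, h1⟩ := hghat
  have h1' : 0 < 1 - ghat := by linarith
  constructor
  swap
  · have : max (1 / ghat) (1 / (1 - ghat)) ≤ 1 / (ghat * (1 - ghat)) := by
      apply max_le
      · apply one_div_le_one_div_of_le (by positivity); nlinarith
      · apply one_div_le_one_div_of_le (by positivity); nlinarith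
    calc _ ≤ 16 * (1 / (ghat * (1 - ghat))) := by linarith
      _ = _ := by ring
  set A := max (δ ^ 2) ghat with hA
  set B := max (δ ^ 2) (1 - ghat) with hB
  have hA1 : δ ^ 2 ≤ A := le_max_left _ _
  have hA2 : ghat ≤ A := le_max_right _ _
  have hB1 : δ ^ 2 ≤ B := le_max_left _ _
  have hB2 : 1 - ghat ≤ B := le_max_right _ _
  have hA0 : 0 < A := by linarith
  have hB0 : 0 < B := by linarith
  have hS : MeasurableSet {ω | M ω ≤ b} := measurableSet_le hMmeas measurable_const
  have hgr : g = μ.real {ω | M ω ≤ b} := hg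
  have hg0 : 0 ≤ g := by rw [hgr]; exact measureReal_nonneg
  have hg1 : g ≤ 1 := by rw [hgr]; exact measureReal_le_one
  have hgc : μ.real {ω | M ω ≤ b}ᶜ = 1 - g := by rw [probReal_compl_eq_one_sub hS, hgr]
  have hq : 0 ≤ g * (1 - g) := mul_nonneg hg0 (by linarith)
  have hs := Real.sq_sqrt hq
  set s := Real.sqrt (g * (1 - g))
  obtain ⟨e1, e2⟩ := abs_le.1 hest
  have k1 : g ≤ 5 * A := by nlinarith [sq_nonneg (δ - s)]
  have k2 : 1 - g ≤ 5 * B := by nlinarith [sq_nonneg (δ - s)]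
  have m1 : g / A ^ 2 ≤ 5 * (1 / ghat) := by
    calc g / A ^ 2 ≤ 5 * A / A ^ 2 := by gcongr
      _ = 5 * (1 / A) := by field_simp
      _ ≤ _ := by gcongr
  have m2 : (1 - g) / B ^ 2 ≤ 5 * (1 / (1 - ghat)) := by
    calc (1 - g) / B ^ 2 ≤ 5 * B / B ^ 2 := by gcongr
      _ = 5 * (1 / B) := by field_simp
      _ ≤ _ := by gcongr
  have hmeas : Measurable (fun ω => (if M ω ≤ b then v1 ω / A else 0)
        - (if b < M ω then v0 ω / B else 0)) :=
    (Measurable.ite hS (hv1meas.div_const _) measurable_const).sub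
      (Measurable.ite (measurableSet_lt measurable_const hMmeas)
        (hv0meas.div_const _) measurable_const)
  have hi1 : Integrable ({ω | M ω ≤ b}.indicator (fun _ => 1 / A ^ 2)) μ :=
    (integrable_const _).indicator hS
  have hi2 : Integrable ({ω | M ω ≤ b}ᶜ.indicator (fun _ => 1 / B ^ 2)) μ :=
    (integrable_const _).indicator hS.compl
  have hint : ∫ ω, ({ω | M ω ≤ b}.indicator (fun _ => 1 / A ^ 2) ω
      + {ω | M ω ≤ b}ᶜ.indicator (fun _ => 1 / B ^ 2) ω) ∂μ = g / A ^ 2 + (1 - g) / B ^ 2 := by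
    rw [integral_add hi1 hi2, integral_indicator_const _ hS, integral_indicator_const _ hS.compl,
      hgc, ← hgr]
    simp only [smul_eq_mul]
    ring
  have hm1 : 1 / ghat ≤ max (1 / ghat) (1 / (1 - ghat)) := le_max_left _ _
  have hm2 : 1 / (1 - ghat) ≤ max (1 / ghat) (1 / (1 - ghat)) := le_max_right _ _
  have hm0 : 0 < 1 / ghat := by positivity
  refine (variance_le_expectation_sq hmeas.aestronglyMeasurable).trans ?_
  refine le_trans (b := g / A ^ 2 + (1 - g) / B ^ 2) ?_ (by linarith)
  rw [← hint]
  refine integral_mono_of_nonneg (Filter.Eventually.of_forall fun ω => ?_) (hi1.add hi2)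
    (Filter.Eventually.of_forall fun ω => ?_)
  · simp only [Pi.pow_apply, Pi.zero_apply]; positivity
  · obtain ⟨a1, a2⟩ := hv1r ω
    obtain ⟨c1, c2⟩ := hv0r ω
    by_cases h : M ω ≤ b
    · have h' : ¬ b < M ω := not_lt.2 h
      simp only [Pi.pow_apply, Set.indicator, Set.mem_compl_iff, Set.mem_setOf_eq, h, h',
        if_true, if_false, not_true, sub_zero, add_zero, div_pow]
      gcongr
      nlinarith
    · have h' : b < M ω := not_le.1 h
      simp only [Pi.pow_apply, Set.indicator, Set.mem_compl_iff, Set.mem_setOf_eq, h, h',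
        if_true, if_false, not_false_iff, zero_sub, zero_add, neg_sq, div_pow]
      gcongr
      nlinarith
end

section
/- Let δ > 0 and let g, ĝ ∈ [0,1] satisfy |ĝ − g| ≤ δ·√(g(1−g)) + δ². Then: (i) if ĝ ≥ 6δ² then g ≥ 3δ²; and (ii) if ĝ < 6δ² then g < 11δ². -/
/-- **Comparability of true and estimated win probabilities at the `δ²` scale.**
If `|ĝ − g| ≤ δ·√(g(1−g)) + δ²` with `g, ĝ ∈ [0,1]` and `δ > 0`, then
(i) `ĝ ≥ 6δ²` implies `g ≥ 3δ²`, and (ii) `ĝ < 6δ²` implies `g < 11δ²`. -/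
theorem win_probability_comparison
    (δ : ℝ) (hδ : 0 < δ)
    (g ghat : ℝ)
    (hg : g ∈ Set.Icc (0 : ℝ) 1) (hghat : ghat ∈ Set.Icc (0 : ℝ) 1)
    (hest : |ghat - g| ≤ δ * Real.sqrt (g * (1 - g)) + δ ^ 2) :
    (6 * δ ^ 2 ≤ ghat → 3 * δ ^ 2 ≤ g) ∧ (ghat < 6 * δ ^ 2 → g < 11 * δ ^ 2) := by
  obtain ⟨hg0, hg1⟩ := hg
  have hle : Real.sqrt (g * (1 - g)) ≤ Real.sqrt g := Real.sqrt_le_sqrt (by nlinarith)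
  have hs0 : 0 ≤ Real.sqrt g := Real.sqrt_nonneg g
  have hsq : Real.sqrt g ^ 2 = g := Real.sq_sqrt hg0
  have hm := mul_le_mul_of_nonneg_left hle hδ.le
  obtain ⟨h1, h2⟩ := abs_le.mp hest
  generalize Real.sqrt g = s at *
  constructor
  · intro h
    by_contra hc
    push Not at hc
    have h3 : 2 * δ < s := by
      by_contra h4
      push Not at h4
      nlinarith [mul_le_mul_of_nonneg_left h4 hδ.le]
    nlinarith
  · intro h
    by_contra hc
    push Not at hc
    have h3 : 3.3 * δ ≤ s := by
      by_contra h4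
      push Not at h4
      nlinarith
    nlinarith [mul_nonneg (sub_nonneg.mpr h3) (sub_nonneg.mpr h3), mul_nonneg (sub_nonneg.mpr h3) hδ.le, mul_pos hδ hδ]
end

section
/- Let d, n be positive integers and D ∈ ℝ^{d×n}, and define A = I_d + D Dᵀ. Then for every x ∈ ℝ^d and every ξ ∈ ℝ^n, |xᵀ A⁻¹ D ξ| ≤ √(xᵀA⁻¹x) · ‖ξ‖₂. -/
open Matrix in
/-- **Bias propagation through regularized least squares.** With `A = I + DDᵀ`, for every
`x ∈ ℝ^d` and `ξ ∈ ℝⁿ`, `|xᵀA⁻¹Dξ| ≤ ‖x‖_{A⁻¹}·‖ξ‖₂`. -/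
theorem ridge_bias_propagation
    (d n : ℕ) (hd : 0 < d) (hn : 0 < n)
    (D : Matrix (Fin d) (Fin n) ℝ)
    (A : Matrix (Fin d) (Fin d) ℝ) (hA : A = 1 + D * Dᵀ)
    (x : Fin d → ℝ) (ξ : Fin n → ℝ) :
    |x ⬝ᵥ (A⁻¹ *ᵥ (D *ᵥ ξ))|
      ≤ Real.sqrt (x ⬝ᵥ (A⁻¹ *ᵥ x)) * Real.sqrt (∑ i, ξ i ^ 2) := by
  have hpd : A.PosDef := by
    rw [hA]
    refine Matrix.PosDef.one.add_posSemidef ?_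
    simpa using Matrix.posSemidef_self_mul_conjTranspose D
  have hdet : IsUnit A.det := (Matrix.isUnit_iff_isUnit_det A).1 hpd.isUnit
  have hsymm : Aᵀ = A := by simp [hA, Matrix.transpose_add, Matrix.transpose_mul]
  have hinv : A⁻¹ᵀ = A⁻¹ := by rw [Matrix.transpose_nonsing_inv, hsymm]
  obtain ⟨y, hy⟩ : ∃ y, y = A⁻¹ *ᵥ x := ⟨_, rfl⟩
  have hx : x = y + D *ᵥ (Dᵀ *ᵥ y) := by
    have h : A *ᵥ y = x := by
      rw [hy, Matrix.mulVec_mulVec, Matrix.mul_nonsing_inv A hdet, Matrix.one_mulVec]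
    rw [← h, hA, Matrix.add_mulVec, Matrix.one_mulVec, Matrix.mulVec_mulVec]
  have h1 : x ⬝ᵥ (A⁻¹ *ᵥ (D *ᵥ ξ)) = (Dᵀ *ᵥ y) ⬝ᵥ ξ := by
    rw [Matrix.dotProduct_mulVec, ← Matrix.mulVec_transpose, hinv, ← hy,
      Matrix.dotProduct_mulVec, ← Matrix.mulVec_transpose]
  have h2 : x ⬝ᵥ y = y ⬝ᵥ y + (Dᵀ *ᵥ y) ⬝ᵥ (Dᵀ *ᵥ y) := by
    conv_lhs => rw [hx]
    rw [add_dotProduct, dotProduct_comm (D *ᵥ _) y, Matrix.dotProduct_mulVec,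
      ← Matrix.mulVec_transpose]
  have hyy : 0 ≤ y ⬝ᵥ y := Finset.sum_nonneg fun i _ => mul_self_nonneg (y i)
  have hcs := Finset.sum_mul_sq_le_sq_mul_sq Finset.univ (Dᵀ *ᵥ y) ξ
  have h3 : ∑ i, (Dᵀ *ᵥ y) i ^ 2 ≤ x ⬝ᵥ y := by
    have : ∑ i, (Dᵀ *ᵥ y) i ^ 2 = (Dᵀ *ᵥ y) ⬝ᵥ (Dᵀ *ᵥ y) := by
      simp only [dotProduct, sq]
    linarith
  have h0 : 0 ≤ ∑ i, ξ i ^ 2 := Finset.sum_nonneg fun i _ => sq_nonneg _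
  rw [h1, ← hy, ← Real.sqrt_mul' _ h0]
  refine Real.abs_le_sqrt (hcs.trans ?_)
  exact mul_le_mul_of_nonneg_right h3 h0
end

section
/- Let d, n be positive integers, D ∈ ℝ^{d×n}, V, Ξ ∈ ℝ^n, and θ* ∈ ℝ^d with ‖θ*‖₂ ≤ 1. Define A = I_d + D Dᵀ and θ̂ = A⁻¹ D V. Then for every x ∈ ℝ^d, |xᵀθ̂ − xᵀθ*| ≤ |xᵀ A⁻¹ D (V − Ξ − Dᵀθ*)| + √(xᵀA⁻¹x)·‖Ξ‖₂ + √(xᵀA⁻¹x). -/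
open Matrix in
theorem wr_abs_dot_le {m : ℕ} (u v : Fin m → ℝ) (q : ℝ) (hq : u ⬝ᵥ u ≤ q) :
    |u ⬝ᵥ v| ≤ Real.sqrt q * Real.sqrt (∑ i, v i ^ 2) := by
  have h1 := Finset.sum_mul_sq_le_sq_mul_sq Finset.univ u v
  have h2 : ∑ i, u i ^ 2 ≤ q := by
    simpa [dotProduct, sq] using hq
  have h0 : 0 ≤ ∑ i, u i ^ 2 := Finset.sum_nonneg fun i _ => sq_nonneg _
  rw [← Real.sqrt_mul (h0.trans h2)]
  apply Real.abs_le_sqrt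
  refine h1.trans ?_
  exact mul_le_mul_of_nonneg_right h2 (Finset.sum_nonneg fun i _ => sq_nonneg _)

open Matrix in
/-- **Deterministic error decomposition for weighted ridge regression with bias.**
With (weighted) contexts `D`, biased observations `V`, bias vector `Ξ`, true parameter
`θ*` with `‖θ*‖₂ ≤ 1`, `A = I + DDᵀ`, and `θ̂ = A⁻¹DV`, for every `x`:
`|xᵀθ̂ − xᵀθ*| ≤ |xᵀA⁻¹D(V − Ξ − Dᵀθ*)| + ‖x‖_{A⁻¹}‖Ξ‖₂ + ‖x‖_{A⁻¹}`. -/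
theorem weighted_ridge_error_decomposition
    (d n : ℕ) (hd : 0 < d) (hn : 0 < n)
    (D : Matrix (Fin d) (Fin n) ℝ) (V Ξ : Fin n → ℝ)
    (θstar : Fin d → ℝ) (hθ : Real.sqrt (∑ i, θstar i ^ 2) ≤ 1)
    (A : Matrix (Fin d) (Fin d) ℝ) (hA : A = 1 + D * Dᵀ)
    (θhat : Fin d → ℝ) (hθhat : θhat = A⁻¹ *ᵥ (D *ᵥ V))
    (x : Fin d → ℝ) :
    |x ⬝ᵥ θhat - x ⬝ᵥ θstar|
      ≤ |x ⬝ᵥ (A⁻¹ *ᵥ (D *ᵥ (V - Ξ - Dᵀ *ᵥ θstar)))|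
        + Real.sqrt (x ⬝ᵥ (A⁻¹ *ᵥ x)) * Real.sqrt (∑ i, Ξ i ^ 2)
        + Real.sqrt (x ⬝ᵥ (A⁻¹ *ᵥ x)) := by
  have hpd : A.PosDef := by
    rw [hA]
    refine Matrix.PosDef.add_posSemidef Matrix.PosDef.one ?_
    simpa using Matrix.posSemidef_self_mul_conjTranspose D
  have hu : IsUnit A.det := hpd.det_pos.ne'.isUnit
  have hT : Aᵀ = A := by rw [hA]; simp [Matrix.transpose_mul]
  obtain ⟨y, hy⟩ : ∃ y, y = A⁻¹ *ᵥ x := ⟨_, rfl⟩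
  have hAy : A *ᵥ y = x := by
    rw [hy, Matrix.mulVec_mulVec, Matrix.mul_nonsing_inv _ hu, Matrix.one_mulVec]
  have key : ∀ w, x ⬝ᵥ (A⁻¹ *ᵥ w) = y ⬝ᵥ w := by
    intro w
    rw [hy, Matrix.dotProduct_mulVec, ← Matrix.mulVec_transpose, Matrix.transpose_nonsing_inv, hT]
  have hD : ∀ w, y ⬝ᵥ (D *ᵥ w) = (Dᵀ *ᵥ y) ⬝ᵥ w := by
    intro w
    rw [Matrix.dotProduct_mulVec, ← Matrix.mulVec_transpose]
  have hAw : ∀ w, A *ᵥ w = w + D *ᵥ (Dᵀ *ᵥ w) := by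
    intro w
    rw [hA, Matrix.add_mulVec, Matrix.one_mulVec, Matrix.mulVec_mulVec]
  have hq : x ⬝ᵥ (A⁻¹ *ᵥ x) = y ⬝ᵥ y + (Dᵀ *ᵥ y) ⬝ᵥ (Dᵀ *ᵥ y) := by
    rw [key, ← hD, ← dotProduct_add, ← hAw, hAy]
  have hθ' : x ⬝ᵥ θstar = y ⬝ᵥ θstar + (Dᵀ *ᵥ y) ⬝ᵥ (Dᵀ *ᵥ θstar) := by
    rw [← hD, ← dotProduct_add, ← hAw, ← key, Matrix.mulVec_mulVec,
      Matrix.nonsing_inv_mul _ hu, Matrix.one_mulVec]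
  have nn : ∀ {m : ℕ} (u : Fin m → ℝ), 0 ≤ u ⬝ᵥ u := fun u =>
    Finset.sum_nonneg fun i _ => mul_self_nonneg _
  have b1 := wr_abs_dot_le (Dᵀ *ᵥ y) Ξ (x ⬝ᵥ (A⁻¹ *ᵥ x)) (by linarith [nn y])
  have b2 := wr_abs_dot_le y θstar (x ⬝ᵥ (A⁻¹ *ᵥ x)) (by linarith [nn (Dᵀ *ᵥ y)])
  have b3 := b2.trans (mul_le_of_le_one_right (Real.sqrt_nonneg _) hθ)
  have e : x ⬝ᵥ θhat - x ⬝ᵥ θstar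
      = x ⬝ᵥ (A⁻¹ *ᵥ (D *ᵥ (V - Ξ - Dᵀ *ᵥ θstar))) + (Dᵀ *ᵥ y) ⬝ᵥ Ξ - y ⬝ᵥ θstar := by
    rw [hθ', hθhat, key, key, hD, hD, dotProduct_sub, dotProduct_sub]
    ring
  rw [e]
  exact (abs_sub _ _).trans (add_le_add ((abs_add_le _ _).trans (add_le_add le_rfl b1)) b3)
end
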